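/- Maximum principle for the transport equation (Lemma 3.1 of the paper, classical form): Let Ω ⊆ ℝ³ be a bounded open set, T > 0, and 0 < α ≤ β. Let u : ℝ³ × ℝ → ℝ³ be continuous and Lipschitz in its first variable uniformly in the second, i.e. there is K ≥ 0 such that ‖u(x,t) − u(y,t)‖ ≤ K‖x − y‖ for all x, y ∈ ℝ³ and all t ∈ [0,T], and suppose u(x,t) = 0 for every x in the frontier of Ω and every t ∈ [0,T]. Let ρ : ℝ³ × ℝ → ℝ be continuously differentiable and satisfy the transport equation ∂ₜρ(x,t) + u(x,t) · ∇ₓρ(x,t) = 0 for every x ∈ Ω and t ∈ [0,T]. If α ≤ ρ(x,0) ≤ β for every x ∈ Ω, then α ≤ ρ(x,t) ≤ β for every x ∈ Ω and every t ∈ [0,T]. -/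

import Mathlib

open Set
open scoped RealInnerProductSpace

/-- One-sided bound: if a `C¹` function satisfies the transport equation on `Ω × [0,T]` (written
with the total derivative) and is at most `c` initially, then it stays at most `c`. -/
theorem transport_upper_bound
    (Ω : Set (EuclideanSpace ℝ (Fin 3))) (hΩopen : IsOpen Ω)
    (hΩbdd : Bornology.IsBounded Ω)
    (T : ℝ) (c : ℝ)
    (u : EuclideanSpace ℝ (Fin 3) × ℝ → EuclideanSpace ℝ (Fin 3))
    (hu_cont : Continuous u)
    (hu_bdry : ∀ x ∈ frontier Ω, ∀ t ∈ Icc (0 : ℝ) T, u (x, t) = 0)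
    (g : EuclideanSpace ℝ (Fin 3) × ℝ → ℝ)
    (hg : ContDiff ℝ 1 g)
    (heq : ∀ x ∈ Ω, ∀ t ∈ Icc (0 : ℝ) T, fderiv ℝ g (x, t) (u (x, t), 1) = 0)
    (hinit : ∀ x ∈ Ω, g (x, 0) ≤ c) :
    ∀ x ∈ Ω, ∀ t ∈ Icc (0 : ℝ) T, g (x, t) ≤ c := by
  intro x hx t ht
  have hgd : Differentiable ℝ g := hg.differentiable (by norm_num)
  have hfc : Continuous (fderiv ℝ g) := hg.continuous_fderiv (by norm_num)
  -- the equation extends to the closure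
  have heq' : ∀ y ∈ closure Ω, ∀ s ∈ Icc (0 : ℝ) T, fderiv ℝ g (y, s) (u (y, s), 1) = 0 := by
    intro y hy s hs
    have hcl : IsClosed {z : EuclideanSpace ℝ (Fin 3) | fderiv ℝ g (z, s) (u (z, s), 1) = 0} := by
      refine isClosed_eq ?_ continuous_const
      fun_prop
    exact closure_minimal (fun z hz => heq z hz s hs) hcl hy
  have hinit' : ∀ y ∈ closure Ω, g (y, 0) ≤ c := by
    intro y hy
    have hcl : IsClosed {z : EuclideanSpace ℝ (Fin 3) | g (z, 0) ≤ c} := by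
      refine isClosed_le ?_ continuous_const
      have := hg.continuous
      fun_prop
    exact closure_minimal (fun z hz => hinit z hz) hcl hy
  -- it suffices to prove an estimate with a small error
  suffices H : ∀ ε > 0, g (x, t) ≤ c + ε * t by
    by_contra! hlt
    have ht0 : 0 ≤ t := ht.1
    have h1 := H ((g (x, t) - c) / (2 * (t + 1))) (by apply div_pos <;> linarith)
    have h2 : (g (x, t) - c) / (2 * (t + 1)) * t ≤ (g (x, t) - c) / 2 := by
      rw [div_mul_eq_mul_div, div_le_div_iff₀ (by linarith) (by norm_num)]
      nlinarith
    linarith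
  intro ε hε
  have hcomp : IsCompact (closure Ω ×ˢ Icc (0 : ℝ) T) :=
    hΩbdd.isCompact_closure.prod isCompact_Icc
  have hcont : Continuous (fun p : EuclideanSpace ℝ (Fin 3) × ℝ => g p - ε * p.2) := by
    have := hg.continuous
    fun_prop
  obtain ⟨⟨y, s⟩, ⟨hy, hs⟩, hmax⟩ := hcomp.exists_isMaxOn
    ⟨(x, t), subset_closure hx, ht⟩ hcont.continuousOn
  simp only at hy hs
  have hxt : g (x, t) - ε * t ≤ g (y, s) - ε * s :=
    hmax (show (x, t) ∈ closure Ω ×ˢ Icc (0 : ℝ) T from ⟨subset_closure hx, ht⟩)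
  rcases hs.1.eq_or_lt with h0 | hpos
  · subst h0
    have := hinit' y hy
    linarith
  exfalso
  have hF : HasFDerivAt g (fderiv ℝ g (y, s)) (y, s) := (hgd (y, s)).hasFDerivAt
  -- the time derivative at the maximum is at least `ε`
  have htime : ε ≤ fderiv ℝ g (y, s) (0, 1) := by
    have hd0 : HasDerivAt (fun r : ℝ => g (y, r)) (fderiv ℝ g (y, s) (0, 1)) s :=
      hF.comp_hasDerivAt s ((hasDerivAt_const s y).prodMk (hasDerivAt_id s))
    have hd : HasDerivAt (fun r : ℝ => g (y, r) - ε * r)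
        (fderiv ℝ g (y, s) (0, 1) - ε * 1) s :=
      hd0.sub ((hasDerivAt_id s).const_mul ε)
    have hm : IsLocalMaxOn (fun r : ℝ => g (y, r) - ε * r) (Icc 0 s) s := by
      apply IsMaxOn.localize
      intro r hr
      exact hmax (show (y, r) ∈ closure Ω ×ˢ Icc (0 : ℝ) T from ⟨hy, hr.1, hr.2.trans hs.2⟩)
    have hcone : (0 - s) ∈ posTangentConeAt (Icc 0 s) s := by
      apply sub_mem_posTangentConeAt_of_segment_subset
      rw [segment_symm, segment_eq_Icc hpos.le]
    have := hm.hasFDerivWithinAt_nonpos hd.hasFDerivAt.hasFDerivWithinAt hcone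
    simp at this
    nlinarith
  -- the space part vanishes
  have hspace : fderiv ℝ g (y, s) (u (y, s), 0) = 0 := by
    by_cases hyΩ : y ∈ Ω
    · have hd : HasFDerivAt (fun z => g (z, s))
          ((fderiv ℝ g (y, s)).comp (ContinuousLinearMap.inl ℝ _ ℝ)) y :=
        hF.comp y (hasFDerivAt_prodMk_left y s)
      have hm : IsLocalMax (fun z => g (z, s)) y := by
        filter_upwards [hΩopen.mem_nhds hyΩ] with z hz
        have : g (z, s) - ε * s ≤ g (y, s) - ε * s :=
          hmax (show (z, s) ∈ closure Ω ×ˢ Icc (0 : ℝ) T from ⟨subset_closure hz, hs⟩)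
        linarith
      have h0 := hm.hasFDerivAt_eq_zero hd
      have := DFunLike.congr_fun h0 (u (y, s))
      simpa using this
    · have hf : y ∈ frontier Ω := by
        rw [hΩopen.frontier_eq]
        exact ⟨hy, hyΩ⟩
      rw [hu_bdry y hf s hs]
      exact map_zero _
  have hsum := heq' y hy s hs
  have hsplit : ((u (y, s), 1) : EuclideanSpace ℝ (Fin 3) × ℝ) = (u (y, s), 0) + (0, 1) := by
    simp
  rw [hsplit, map_add, hspace] at hsum
  linarith

/-- **Maximum principle for the transport equation** (Lemma 3.1, classical form).
If `u` is continuous, Lipschitz in space uniformly in time, and vanishes on the boundary of a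
bounded open set `Ω ⊆ ℝ³`, and a `C¹` density `ρ` satisfies the transport equation
`∂ₜρ + u · ∇ₓρ = 0` on `Ω × [0,T]` with `α ≤ ρ(·,0) ≤ β` on `Ω`, then `α ≤ ρ ≤ β` on
`Ω × [0,T]`. -/
theorem transport_maximum_principle
    (Ω : Set (EuclideanSpace ℝ (Fin 3))) (hΩopen : IsOpen Ω)
    (hΩbdd : Bornology.IsBounded Ω)
    (T : ℝ) (hT : 0 < T) (α β : ℝ) (hα : 0 < α) (hαβ : α ≤ β)
    (u : EuclideanSpace ℝ (Fin 3) × ℝ → EuclideanSpace ℝ (Fin 3))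
    (hu_cont : Continuous u)
    (K : ℝ) (hK : 0 ≤ K)
    (hu_lip : ∀ t ∈ Icc (0 : ℝ) T, ∀ x y : EuclideanSpace ℝ (Fin 3),
      ‖u (x, t) - u (y, t)‖ ≤ K * ‖x - y‖)
    (hu_bdry : ∀ x ∈ frontier Ω, ∀ t ∈ Icc (0 : ℝ) T, u (x, t) = 0)
    (ρ : EuclideanSpace ℝ (Fin 3) × ℝ → ℝ)
    (hρ : ContDiff ℝ 1 ρ)
    (htransport : ∀ x ∈ Ω, ∀ t ∈ Icc (0 : ℝ) T,
      deriv (fun s : ℝ => ρ (x, s)) t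
        + ⟪u (x, t), gradient (fun y => ρ (y, t)) x⟫ = 0)
    (hinit : ∀ x ∈ Ω, ρ (x, 0) ∈ Icc α β) :
    ∀ x ∈ Ω, ∀ t ∈ Icc (0 : ℝ) T, ρ (x, t) ∈ Icc α β := by
  have hgd : Differentiable ℝ ρ := hρ.differentiable (by norm_num)
  have heq : ∀ x ∈ Ω, ∀ t ∈ Icc (0 : ℝ) T, fderiv ℝ ρ (x, t) (u (x, t), 1) = 0 := by
    intro x hx t ht
    have hF : HasFDerivAt ρ (fderiv ℝ ρ (x, t)) (x, t) := (hgd (x, t)).hasFDerivAt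
    have hd0 : HasDerivAt (fun r : ℝ => ρ (x, r)) (fderiv ℝ ρ (x, t) (0, 1)) t :=
      hF.comp_hasDerivAt t ((hasDerivAt_const t x).prodMk (hasDerivAt_id t))
    have hd : HasFDerivAt (fun z => ρ (z, t))
        ((fderiv ℝ ρ (x, t)).comp (ContinuousLinearMap.inl ℝ _ ℝ)) x :=
      hF.comp x (hasFDerivAt_prodMk_left x t)
    have h := htransport x hx t ht
    rw [hd0.deriv, real_inner_comm, gradient, InnerProductSpace.toDual_symm_apply, hd.fderiv] at h
    have hsplit : ((u (x, t), 1) : EuclideanSpace ℝ (Fin 3) × ℝ) = (u (x, t), 0) + (0, 1) := by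
      simp
    rw [hsplit, map_add, add_comm]
    simpa using h
  intro x hx t ht
  constructor
  · have h := transport_upper_bound Ω hΩopen hΩbdd T (-α) u hu_cont hu_bdry (fun p => -ρ p) hρ.neg
      (by
        intro y hy s hs
        rw [fderiv_fun_neg]
        simpa using heq y hy s hs)
      (fun y hy => neg_le_neg (hinit y hy).1) x hx t ht
    exact neg_le_neg_iff.mp h
  · exact transport_upper_bound Ω hΩopen hΩbdd T β u hu_cont hu_bdry ρ hρ heq
      (fun y hy => (hinit y hy).2) x hx t ht
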